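/- Let M ∈ ℝ⁵ be of two-node Gaussian-EQMOM form with parameters (ρ₁, ρ₂, v₁, v₂, σ), ρ₁, ρ₂ > 0, σ > 0, with flux vector F(M), and let a > √3. Define δ⁺ = max{v₁ + aσ, v₂ + aσ, 0} and δ⁻ = min{v₁ − aσ, v₂ − aσ, 0}. Then both Hankel matrices H₂(δ⁺M − F(M)) and H₂(F(M) − δ⁻M) are positive definite. -/

import Mathlib

open MeasureTheory Real

/-- The `k`-th moment `Δ_k(v, s²)` of the normal distribution with mean `v` and variance `s²`. -/
noncomputable def gaussMoment (v s : ℝ) (k : ℕ) : ℝ :=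
  ∫ x : ℝ, x ^ k * ((2 * π * s ^ 2) ^ (-(1 : ℝ) / 2) * Real.exp (-(x - v) ^ 2 / (2 * s ^ 2)))

/-- The `3×3` Hankel matrix `H₂(c)` of a vector `c ∈ ℝ⁵`, with `(j,k)` entry `c_{j+k}`. -/
noncomputable def hankel2 (c : Fin 5 → ℝ) : Matrix (Fin 3) (Fin 3) ℝ :=
  Matrix.of fun j k => c ⟨j.1 + k.1, by have := j.isLt; have := k.isLt; omega⟩

lemma aux_int_poly (b : ℝ) (hb : 0 < b) (p : Polynomial ℝ) :
    Integrable (fun x : ℝ => p.eval x * Real.exp (-b * x ^ 2)) := by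
  induction p using Polynomial.induction_on' with
  | add p q hp hq => 
    refine (hp.add hq).congr (Filter.Eventually.of_forall fun x => ?_)
    simp [add_mul]
  | monomial n c =>
    have h := (integrable_rpow_mul_exp_neg_mul_sq hb (s := (n : ℝ))
      (by have : (0 : ℝ) ≤ n := Nat.cast_nonneg n; linarith)).const_mul c
    simpa [Polynomial.eval_monomial, mul_assoc] using h

lemma aux_int (v s : ℝ) (hs : 0 < s) (k : ℕ) :
    Integrable (fun x : ℝ => x ^ k *
      ((2 * π * s ^ 2) ^ (-(1 : ℝ) / 2) * Real.exp (-(x - v) ^ 2 / (2 * s ^ 2)))) := by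
  have h := ((aux_int_poly (1 / (2 * s ^ 2)) (by positivity)
    ((Polynomial.X + Polynomial.C v) ^ k)).comp_sub_right v).const_mul
      ((2 * π * s ^ 2) ^ (-(1 : ℝ) / 2))
  refine h.congr (Filter.Eventually.of_forall fun x => ?_)
  have e : -(1 / (2 * s ^ 2)) * (x - v) ^ 2 = -(x - v) ^ 2 / (2 * s ^ 2) := by ring
  simp only [Polynomial.eval_pow, Polynomial.eval_add, Polynomial.eval_X, Polynomial.eval_C, e]
  ring

lemma aux_rec (v s : ℝ) (hs : 0 < s) (k : ℕ) :
    gaussMoment v s (k + 1) = v * gaussMoment v s k + k * s ^ 2 * gaussMoment v s (k - 1) := by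
  set g : ℝ → ℝ := fun x => (2 * π * s ^ 2) ^ (-(1 : ℝ) / 2) *
    Real.exp (-(x - v) ^ 2 / (2 * s ^ 2)) with hg
  have hi : ∀ j : ℕ, Integrable (fun x : ℝ => x ^ j * g x) := aux_int v s hs
  have hgd : ∀ x, HasDerivAt g (-(x - v) / s ^ 2 * g x) x := by
    intro x
    have h1 : HasDerivAt (fun x : ℝ => -(x - v) ^ 2 / (2 * s ^ 2)) (-(x - v) / s ^ 2) x := by
      have := ((((hasDerivAt_id x).sub_const v).pow 2).neg).div_const (2 * s ^ 2)
      refine this.congr_deriv ?_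
      simp
      field_simp
      ring
    refine ((h1.exp).const_mul ((2 * π * s ^ 2) ^ (-(1 : ℝ) / 2))).congr_deriv ?_
    simp only [hg]; ring
  have hd : ∀ x, HasDerivAt (fun x : ℝ => s ^ 2 * (x ^ k * g x))
      ((k * s ^ 2) * (x ^ (k - 1) * g x) + v * (x ^ k * g x) - x ^ (k + 1) * g x) x := by
    intro x
    refine (((hasDerivAt_pow k x).mul (hgd x)).const_mul (s ^ 2)).congr_deriv ?_
    field_simp
    ring
  have hA := (hi (k - 1)).const_mul ((k : ℝ) * s ^ 2)
  have hB := (hi k).const_mul v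
  have h0 := integral_eq_zero_of_hasDerivAt_of_integrable hd
    ((hA.add hB).sub (hi (k + 1))) ((hi k).const_mul (s ^ 2))
  have hAB : Integrable (fun x : ℝ => (k * s ^ 2) * (x ^ (k - 1) * g x) + v * (x ^ k * g x)) :=
    hA.add hB
  rw [integral_sub hAB (hi (k + 1)), integral_add hA hB, integral_const_mul,
    integral_const_mul] at h0
  change ∫ x, x ^ (k + 1) * g x = v * (∫ x, x ^ k * g x) +
    k * s ^ 2 * ∫ x, x ^ (k - 1) * g x
  linarith

lemma aux_zero (v s : ℝ) (hs : 0 < s) : gaussMoment v s 0 = 1 := by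
  have h := ProbabilityTheory.integral_gaussianPDFReal_eq_one v (v := ⟨s ^ 2, sq_nonneg s⟩)
    (by intro h; have := congrArg NNReal.toReal h; exact (pow_pos hs 2).ne' this)
  rw [← h]
  unfold gaussMoment
  congr 1
  ext x
  have e : (2 * π * s ^ 2) ^ (-(1 : ℝ) / 2) = (√(2 * π * s ^ 2))⁻¹ := by
    rw [neg_div, Real.rpow_neg (by positivity), Real.sqrt_eq_rpow]
  rw [e]
  simp [ProbabilityTheory.gaussianPDFReal]
  rfl

lemma aux_moments (v s : ℝ) (hs : 0 < s) :
    gaussMoment v s 0 = 1 ∧ gaussMoment v s 1 = v ∧ gaussMoment v s 2 = v ^ 2 + s ^ 2 ∧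
    gaussMoment v s 3 = v ^ 3 + 3 * v * s ^ 2 ∧
    gaussMoment v s 4 = v ^ 4 + 6 * v ^ 2 * s ^ 2 + 3 * s ^ 4 ∧
    gaussMoment v s 5 = v ^ 5 + 10 * v ^ 3 * s ^ 2 + 15 * v * s ^ 4 := by
  have h0 := aux_zero v s hs
  have h1 := aux_rec v s hs 0
  have h2 := aux_rec v s hs 1
  have h3 := aux_rec v s hs 2
  have h4 := aux_rec v s hs 3
  have h5 := aux_rec v s hs 4
  norm_num at h1 h2 h3 h4 h5
  rw [h0] at h1 h2
  rw [h1] at h2 h3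
  rw [h2] at h3 h4
  rw [h3] at h4 h5
  rw [h4] at h5
  refine ⟨h0, ?_, ?_, ?_, ?_, ?_⟩
  · linarith
  · rw [h2]; ring
  · rw [h3]; ring
  · rw [h4]; ring
  · rw [h5]; ring

/-- the one-node quadratic form of `δ m - m⁺`. -/
lemma aux_core (d U B W : ℝ) (hd : √3 < d) (h : U ≠ 0 ∨ B ≠ 0 ∨ W ≠ 0) (e : ℝ) (he : e ^ 2 = 1) :
    0 < d * (U ^ 2 + B ^ 2 + 2 * W ^ 2) - e * (2 * B * U + 4 * B * W) := by
  have hq : 0 < U ^ 2 + B ^ 2 + 2 * W ^ 2 := by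
    rcases h with h | h | h <;> positivity
  have h3 : (√3) ^ 2 = 3 := Real.sq_sqrt (by norm_num)
  have hp : 0 < √3 := by positivity
  have key : √3 * (e * (2 * B * U + 4 * B * W)) ≤ 3 * (U ^ 2 + B ^ 2 + 2 * W ^ 2) := by
    have : 3 * (U ^ 2 + B ^ 2 + 2 * W ^ 2) - √3 * (e * (2 * B * U + 4 * B * W))
        = (√3 * B - e * (U + 2 * W)) ^ 2 + 2 * (U - W) ^ 2 := by
      linear_combination (-B ^ 2) * h3 - (U + 2 * W) ^ 2 * he
    nlinarith [sq_nonneg (√3 * B - e * (U + 2 * W)), sq_nonneg (U - W)]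
  have : √3 * (e * (2 * B * U + 4 * B * W)) < √3 * (d * (U ^ 2 + B ^ 2 + 2 * W ^ 2)) := by
    have : √3 * √3 < √3 * d := mul_lt_mul_of_pos_left hd hp
    nlinarith
  have := lt_of_mul_lt_mul_left this hp.le
  linarith

lemma aux_node (v s a δ e x y z : ℝ) (hs : 0 < s) (ha : √3 < a) (he : e ^ 2 = 1)
    (hδ : a * s ≤ e * (δ - v)) (h : x ≠ 0 ∨ y ≠ 0 ∨ z ≠ 0) :
    0 < e * (x ^ 2 * (δ * gaussMoment v s 0 - gaussMoment v s 1)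
      + 2 * x * y * (δ * gaussMoment v s 1 - gaussMoment v s 2)
      + (2 * x * z + y ^ 2) * (δ * gaussMoment v s 2 - gaussMoment v s 3)
      + 2 * y * z * (δ * gaussMoment v s 3 - gaussMoment v s 4)
      + z ^ 2 * (δ * gaussMoment v s 4 - gaussMoment v s 5)) := by
  obtain ⟨h0, h1, h2, h3, h4, h5⟩ := aux_moments v s hs
  rw [h0, h1, h2, h3, h4, h5]
  have hd : √3 < e * (δ - v) / s := lt_of_lt_of_le ha ((le_div_iff₀ hs).2 hδ)
  have hne : (x + y * v + z * v ^ 2 + z * s ^ 2) ≠ 0 ∨ ((y + 2 * z * v) * s) ≠ 0 ∨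
      z * s ^ 2 ≠ 0 := by
    by_contra! hc
    obtain ⟨c1, c2, c3⟩ := hc
    have z0 : z = 0 := by simpa [hs.ne'] using c3
    subst z0
    have y0 : y = 0 := by simpa [hs.ne'] using c2
    subst y0
    have x0 : x = 0 := by simpa using c1
    simp_all
  have hc := mul_pos hs (aux_core _ _ _ _ hd hne e he)
  have hs' := hs.ne'
  refine lt_of_lt_of_eq hc ?_
  field_simp
  ring

lemma aux_herm (c : Fin 5 → ℝ) : (hankel2 c).IsHermitian := by
  ext i j
  simp [hankel2, add_comm]

lemma aux_pd (c : Fin 5 → ℝ)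
    (h : ∀ x y z : ℝ, (x ≠ 0 ∨ y ≠ 0 ∨ z ≠ 0) → 0 < x ^ 2 * c 0 + 2 * x * y * c 1
      + (2 * x * z + y ^ 2) * c 2 + 2 * y * z * c 3 + z ^ 2 * c 4) : (hankel2 c).PosDef := by
  refine Matrix.PosDef.of_dotProduct_mulVec_pos (aux_herm c) fun w hw => ?_
  have hw' : w 0 ≠ 0 ∨ w 1 ≠ 0 ∨ w 2 ≠ 0 := by
    by_contra! hc
    apply hw
    ext i
    fin_cases i
    · exact hc.1
    · exact hc.2.1
    · exact hc.2.2
  have hh := h _ _ _ hw'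
  have : star w ⬝ᵥ (hankel2 c).mulVec w = w 0 ^ 2 * c 0 + 2 * w 0 * w 1 * c 1
      + (2 * w 0 * w 2 + w 1 ^ 2) * c 2 + 2 * w 1 * w 2 * c 3 + w 2 ^ 2 * c 4 := by
    simp only [dotProduct, Matrix.mulVec, Fin.sum_univ_three, hankel2, Matrix.of_apply,
      Pi.star_apply, star_trivial]
    change w 0 * (c 0 * w 0 + c 1 * w 1 + c 2 * w 2) + w 1 * (c 1 * w 0 + c 2 * w 1 + c 3 * w 2)
      + w 2 * (c 2 * w 0 + c 3 * w 1 + c 4 * w 2) = _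
    ring
  rw [this]
  exact hh

/-- for a two-node Gaussian-EQMOM moment vector `M` with flux `F`, and `a > √3`,
with `δ⁺ = max{v₁+aσ, v₂+aσ, 0}` and `δ⁻ = min{v₁−aσ, v₂−aσ, 0}`, both `H₂(δ⁺M − F)` and
`H₂(F − δ⁻M)` are positive definite. -/
theorem eqmom_hankel_posDef (ρ₁ ρ₂ v₁ v₂ σ a : ℝ)
    (hρ₁ : 0 < ρ₁) (hρ₂ : 0 < ρ₂) (hσ : 0 < σ) (ha : Real.sqrt 3 < a)
    (M F : Fin 5 → ℝ)
    (hM : ∀ k : Fin 5, M k = ρ₁ * gaussMoment v₁ σ k.1 + ρ₂ * gaussMoment v₂ σ k.1)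
    (hF : ∀ k : Fin 5, F k = ρ₁ * gaussMoment v₁ σ (k.1 + 1) + ρ₂ * gaussMoment v₂ σ (k.1 + 1)) :
    (hankel2 (fun k => max (max (v₁ + a * σ) (v₂ + a * σ)) 0 * M k - F k)).PosDef ∧
    (hankel2 (fun k => F k - min (min (v₁ - a * σ) (v₂ - a * σ)) 0 * M k)).PosDef := by

  constructor
  · set δ := max (max (v₁ + a * σ) (v₂ + a * σ)) 0 with hδ
    have d1 : v₁ + a * σ ≤ δ := (le_max_left _ _).trans (le_max_left _ _)
    have d2 : v₂ + a * σ ≤ δ := (le_max_right _ _).trans (le_max_left _ _)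
    refine aux_pd _ fun x y z h => ?_
    have n1 := mul_pos hρ₁ (aux_node v₁ σ a δ 1 x y z hσ ha (by norm_num) (by linarith) h)
    have n2 := mul_pos hρ₂ (aux_node v₂ σ a δ 1 x y z hσ ha (by norm_num) (by linarith) h)
    simp only [hM, hF]
    have n3 := add_pos n1 n2
    refine lt_of_lt_of_eq n3 ?_
    norm_num
    ring
  · set δ := min (min (v₁ - a * σ) (v₂ - a * σ)) 0 with hδ
    have d1 : δ ≤ v₁ - a * σ := (min_le_left _ _).trans (min_le_left _ _)
    have d2 : δ ≤ v₂ - a * σ := (min_le_left _ _).trans (min_le_right _ _)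
    refine aux_pd _ fun x y z h => ?_
    have n1 := mul_pos hρ₁ (aux_node v₁ σ a δ (-1) x y z hσ ha (by norm_num) (by linarith) h)
    have n2 := mul_pos hρ₂ (aux_node v₂ σ a δ (-1) x y z hσ ha (by norm_num) (by linarith) h)
    simp only [hM, hF]
    have n3 := add_pos n1 n2
    refine lt_of_lt_of_eq n3 ?_
    norm_num
    ring
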